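/- Let E be a Banach space, T > 0, and let K be a Volterra kernel on [0,T] satisfying Condition (A) with exponent α ∈ [0, 1/4). Let ψ: [0,T]² → E be strongly λ-Hölder bi-continuous with λ > α. Then for every ε > 0 there exists δ > 0 such that for every grid partition π of [0,T]² with mesh ‖π‖ < δ, the step approximation ψ^π satisfies ∫_{[0,T]²} ‖(K*⊗K*)(ψ^π − ψ)(u,v)‖_E² du dv < ε; i.e., (K*⊗K*)(ψ^π − ψ) converges to 0 in L²([0,T]²; E) as the mesh of the partition tends to 0. -/

import Mathlib

open MeasureTheory Set

noncomputable section

namespace YS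

variable {E : Type*} [NormedAddCommGroup E] [NormedSpace ℝ E]

/-- A Volterra kernel: a measurable `K : ℝ² → ℝ` with `K t s = 0` whenever `s ≥ t`. -/
def IsVolterraKernel (K : ℝ → ℝ → ℝ) : Prop :=
  Measurable (Function.uncurry K) ∧ ∀ t s : ℝ, t ≤ s → K t s = 0

/-- Condition (A) with exponent `α` and constant `C`; here `K' t s` denotes the partial
derivative `∂K(t,s)/∂t`, whose existence is part of the condition. -/
def CondA (T α C : ℝ) (K K' : ℝ → ℝ → ℝ) : Prop :=
  (∀ s t : ℝ, 0 < s → s < t → t ≤ T → |K t s| ≤ C * s ^ (-α) * (t - s) ^ (-α)) ∧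
  ∀ s t : ℝ, 0 < s → s < t → t ≤ T →
    HasDerivAt (fun r => K r s) (K' t s) t ∧ |K' t s| ≤ C * (t - s) ^ (-(α + 1))

/-- The operator `𝒦*`:  `(𝒦*φ)(s) = φ(s)K(T,s) + ∫_s^T [φ(r) − φ(s)] ∂K(r,s)/∂r dr`. -/
def Kstar (T : ℝ) (K K' : ℝ → ℝ → ℝ) (φ : ℝ → E) (s : ℝ) : E :=
  K T s • φ s + ∫ r in s..T, K' r s • (φ r - φ s)

/-- The operator `A^K`. -/
def AK (T : ℝ) (K' : ℝ → ℝ → ℝ) (φ : ℝ → E) (s : ℝ) : E :=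
  ∫ r in s..T, K' r s • (φ r - φ s)

/-- Rectangular increment `f(u₁,u₂;v₁,v₂)`. -/
def rectInc (ψ : ℝ → ℝ → E) (u₁ u₂ v₁ v₂ : ℝ) : E :=
  ψ u₁ v₁ + ψ u₂ v₂ - ψ u₁ v₂ - ψ u₂ v₁

/-- The operator `B^K`. -/
def BK (T : ℝ) (K' : ℝ → ℝ → ℝ) (ψ : ℝ → ℝ → E) (u v : ℝ) : E :=
  ∫ r₂ in v..T, ∫ r₁ in u..T, (K' r₁ u * K' r₂ v) • rectInc ψ u r₁ v r₂

/-- The operator `𝒦* ⊗ 𝒦*`. -/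
def KstarT (T : ℝ) (K K' : ℝ → ℝ → ℝ) (ψ : ℝ → ℝ → E) (u v : ℝ) : E :=
  (K T u * K T v) • ψ u v + K T v • AK T K' (fun x => ψ x v) u +
    K T u • AK T K' (fun y => ψ u y) v + BK T K' ψ u v

/-- A partition `0 = s₀ < s₁ < ⋯ < s_n = T` of `[0,T]`. -/
structure Partition (T : ℝ) where
  n : ℕ
  pts : ℕ → ℝ
  n_pos : 0 < n
  first : pts 0 = 0
  last : pts n = T
  lt : ∀ i < n, pts i < pts (i + 1)

/-- Mesh of a partition: the largest increment. -/
def Partition.mesh {T : ℝ} (P : Partition T) : ℝ :=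
  (Finset.range P.n).sup' (Finset.nonempty_range_iff.mpr P.n_pos.ne')
    fun i => P.pts (i + 1) - P.pts i

/-- One-dimensional step approximation `φ^π`. -/
def step1 {T : ℝ} (P : Partition T) (φ : ℝ → E) (s : ℝ) : E :=
  ∑ i ∈ Finset.range P.n,
    (Set.Ico (P.pts i) (P.pts (i + 1))).indicator (fun _ => φ (P.pts i)) s

/-- Two-dimensional step approximation `ψ^π` for the grid partition `P × Q`. -/
def step2 {T : ℝ} (P Q : Partition T) (ψ : ℝ → ℝ → E) (u v : ℝ) : E :=
  ∑ i ∈ Finset.range P.n, ∑ j ∈ Finset.range Q.n,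
    ((Set.Ico (P.pts i) (P.pts (i + 1))) ×ˢ (Set.Ico (Q.pts j) (Q.pts (j + 1)))).indicator
      (fun _ => ψ (P.pts i) (Q.pts j)) (u, v)

/-- `λ`-Hölder continuity on `[0,T]` with constant `C`. -/
def IsHolderWith (T lam C : ℝ) (φ : ℝ → E) : Prop :=
  ∀ t₁ ∈ Icc (0:ℝ) T, ∀ t₂ ∈ Icc (0:ℝ) T, ‖φ t₁ - φ t₂‖ ≤ C * |t₁ - t₂| ^ lam

/-- `λ`-Hölder continuity on `[0,T]`. -/
def IsHolder (T lam : ℝ) (φ : ℝ → E) : Prop := ∃ C : ℝ, IsHolderWith T lam C φ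

/-- `λ`-Hölder bi-continuity with constant `C`. -/
def IsHolderBiWith (T lam C : ℝ) (ψ : ℝ → ℝ → E) : Prop :=
  (∀ u₁ ∈ Icc (0:ℝ) T, ∀ u₂ ∈ Icc (0:ℝ) T, ∀ v ∈ Icc (0:ℝ) T,
      ‖ψ u₂ v - ψ u₁ v‖ ≤ C * |u₂ - u₁| ^ lam) ∧
  ∀ u ∈ Icc (0:ℝ) T, ∀ v₁ ∈ Icc (0:ℝ) T, ∀ v₂ ∈ Icc (0:ℝ) T,
      ‖ψ u v₂ - ψ u v₁‖ ≤ C * |v₂ - v₁| ^ lam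

/-- `λ`-Hölder bi-continuity. -/
def IsHolderBi (T lam : ℝ) (ψ : ℝ → ℝ → E) : Prop := ∃ C : ℝ, IsHolderBiWith T lam C ψ

/-- Strong `λ`-Hölder bi-continuity with constant `C`. -/
def IsStrongHolderBiWith (T lam C : ℝ) (ψ : ℝ → ℝ → E) : Prop :=
  IsHolderBiWith T lam C ψ ∧
  ∀ u₁ ∈ Icc (0:ℝ) T, ∀ u₂ ∈ Icc (0:ℝ) T, ∀ v₁ ∈ Icc (0:ℝ) T, ∀ v₂ ∈ Icc (0:ℝ) T,
    ‖rectInc ψ u₁ u₂ v₁ v₂‖ ≤ C * |u₂ - u₁| ^ lam * |v₂ - v₁| ^ lam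

/-- Strong `λ`-Hölder bi-continuity. -/
def IsStrongHolderBi (T lam : ℝ) (ψ : ℝ → ℝ → E) : Prop :=
  ∃ C : ℝ, IsStrongHolderBiWith T lam C ψ

/-- The covariance function `R(s,t) = ∫_0^{s∧t} K(t,r)K(s,r) dr` of the Volterra process. -/
def covR (K : ℝ → ℝ → ℝ) (s t : ℝ) : ℝ := ∫ r in (0:ℝ)..(min s t), K t r * K s r

/-- The 2D Riemann–Stieltjes sum of `f` against `g` over the grid partition `P × Q`. -/
def RSsum {T : ℝ} (P Q : Partition T) (f g : ℝ → ℝ → ℝ) : ℝ :=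
  ∑ i ∈ Finset.range P.n, ∑ j ∈ Finset.range Q.n,
    f (P.pts i) (Q.pts j) *
      rectInc g (P.pts i) (P.pts (i + 1)) (Q.pts j) (Q.pts (j + 1))

/-- Cell data. -/
def Cell {T : ℝ} (P : Partition T) (u : ℝ) (i : ℕ) : Prop :=
  i < P.n ∧ P.pts i ≤ u ∧ u < P.pts (i + 1)

theorem pts_mono {T : ℝ} (P : Partition T) {i j : ℕ} (hij : i ≤ j) (hj : j ≤ P.n) :
    P.pts i ≤ P.pts j := by
  induction j, hij using Nat.le_induction with
  | base => exact le_rfl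
  | succ k hk ih => exact (ih (by omega)).trans (P.lt k (by omega)).le

theorem cell_lt {T : ℝ} (P : Partition T) {u r : ℝ} {i j : ℕ} (hi : Cell P u i) (hj : Cell P r j)
    (hur : u ≤ r) : i ≤ j := by
  by_contra! h
  have := pts_mono P (i := j + 1) (j := i) h hi.1.le
  linarith [hi.2.1, hj.2.2]

theorem cell_unique {T : ℝ} (P : Partition T) {u : ℝ} {i j : ℕ} (hi : Cell P u i)
    (hj : Cell P u j) : i = j :=
  le_antisymm (cell_lt P hi hj le_rfl) (cell_lt P hj hi le_rfl)

theorem cell_exists {T : ℝ} (P : Partition T) {u : ℝ} (h0 : 0 ≤ u) (h1 : u < T) :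
    ∃ i, Cell P u i := by
  have hex : ∃ k, u < P.pts k ∧ k ≤ P.n := ⟨P.n, by rw [P.last]; exact h1, le_rfl⟩
  classical
  have hs := Nat.find_spec hex
  have hm := fun m => Nat.find_min (m := m) hex
  rcases hk : Nat.find hex with _ | k
  · rw [hk, P.first] at hs; linarith [hs.1]
  · rw [hk] at hs
    refine ⟨k, by omega, ?_, hs.1⟩
    have := hm k (by omega)
    by_contra! h
    exact this ⟨h, by omega⟩

open Classical in
/-- Index of the cell. -/
def idx {T : ℝ} (P : Partition T) (u : ℝ) : ℕ := if h : ∃ i, Cell P u i then h.choose else 0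

theorem idx_eq {T : ℝ} (P : Partition T) {u : ℝ} {i : ℕ} (hi : Cell P u i) : idx P u = i := by
  have h : ∃ i, Cell P u i := ⟨i, hi⟩
  unfold idx
  rw [dif_pos h]
  exact cell_unique P h.choose_spec hi

theorem idx_cell {T : ℝ} (P : Partition T) {u : ℝ} (h0 : 0 ≤ u) (h1 : u < T) :
    Cell P u (idx P u) := by
  obtain ⟨i, hi⟩ := cell_exists P h0 h1
  rw [idx_eq P hi]; exact hi

/-- left point -/
def pr {T : ℝ} (P : Partition T) (u : ℝ) : ℝ := P.pts (idx P u)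

/-- right point -/
def nx {T : ℝ} (P : Partition T) (u : ℝ) : ℝ := P.pts (idx P u + 1)

theorem step2_eq {E : Type*} [NormedAddCommGroup E] [NormedSpace ℝ E]
    {T : ℝ} (P Q : Partition T) (ψ : ℝ → ℝ → E) {u v : ℝ} (hu0 : 0 ≤ u) (hu1 : u < T)
    (hv0 : 0 ≤ v) (hv1 : v < T) : step2 P Q ψ u v = ψ (pr P u) (pr Q v) := by
  have hu := idx_cell P hu0 hu1
  have hv := idx_cell Q hv0 hv1
  unfold step2
  rw [Finset.sum_eq_single (idx P u), Finset.sum_eq_single (idx Q v)]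
  · rw [Set.indicator_of_mem]
    · rfl
    · exact ⟨⟨hu.2.1, hu.2.2⟩, ⟨hv.2.1, hv.2.2⟩⟩
  · intro j hj hne
    rw [Set.indicator_of_notMem]
    rintro ⟨_, h⟩
    exact hne (cell_unique Q ⟨Finset.mem_range.1 hj, h.1, h.2⟩ hv)
  · intro h; exact absurd (Finset.mem_range.2 hv.1) h
  · intro i hi hne
    apply Finset.sum_eq_zero
    intro j hj
    rw [Set.indicator_of_notMem]
    rintro ⟨h, _⟩
    exact hne (cell_unique P ⟨Finset.mem_range.1 hi, h.1, h.2⟩ hu)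
  · intro h; exact absurd (Finset.mem_range.2 hu.1) h

theorem incr_le_mesh {T : ℝ} (P : Partition T) {i : ℕ} (hi : i < P.n) :
    P.pts (i + 1) - P.pts i ≤ P.mesh :=
  Finset.le_sup' (fun i => P.pts (i + 1) - P.pts i) (Finset.mem_range.2 hi)

theorem pr_nx {T : ℝ} (P : Partition T) {u : ℝ} (h0 : 0 ≤ u) (h1 : u < T) :
    0 ≤ pr P u ∧ pr P u ≤ u ∧ u < nx P u ∧ nx P u ≤ T ∧ nx P u - pr P u ≤ P.mesh := by
  have hu := idx_cell P h0 h1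
  refine ⟨?_, hu.2.1, hu.2.2, ?_, incr_le_mesh P hu.1⟩
  · have := pts_mono P (Nat.zero_le (idx P u)) hu.1.le
    rwa [P.first] at this
  · have := pts_mono P (i := idx P u + 1) (j := P.n) hu.1 le_rfl
    rwa [P.last] at this

theorem pr_cases {T : ℝ} (P : Partition T) {u r : ℝ} (h0 : 0 ≤ u) (hur : u < r) (h1 : r < T) :
    (pr P r = pr P u ∧ r < nx P u) ∨ nx P u ≤ pr P r := by
  have hu := idx_cell P h0 (hur.trans h1)
  have hr := idx_cell P (h0.trans hur.le) h1
  have hle := cell_lt P hu hr hur.le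
  rcases hle.eq_or_lt with h | h
  · left
    refine ⟨by unfold pr; rw [h], by unfold nx; rw [h]; exact hr.2.2⟩
  · right
    exact pts_mono P h hr.1.le

/-- local weight -/
def mw {T : ℝ} (P : Partition T) (lam β : ℝ) (u : ℝ) : ℝ :=
  (nx P u - pr P u) ^ lam * (nx P u - u) ^ (-β)

theorem mw_nonneg {T : ℝ} (P : Partition T) (lam β : ℝ) {u : ℝ} (h0 : 0 ≤ u) (h1 : u < T) :
    0 ≤ mw P lam β u := by
  obtain ⟨a, b, c, d, e⟩ := pr_nx P h0 h1
  unfold mw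
  have := Real.rpow_nonneg (show 0 ≤ nx P u - pr P u by linarith) lam
  have := Real.rpow_nonneg (show 0 ≤ nx P u - u by linarith) (-β)
  positivity

theorem rpow_split {x d lam β : ℝ} (hx : 0 < x) (hxd : x ≤ d) (hβl : β ≤ lam) :
    x ^ lam ≤ d ^ (lam - β) * x ^ β := by
  calc x ^ lam = x ^ (lam - β) * x ^ β := by rw [← Real.rpow_add hx]; congr 1; ring
    _ ≤ _ := by
      gcongr

theorem jump_le {T : ℝ} (P : Partition T) {lam β u r : ℝ} (hlam : 0 ≤ lam) (hβ : 0 ≤ β)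
    (h0 : 0 ≤ u) (hur : u < r) (h1 : r < T) (hn : nx P u ≤ r) :
    (u - pr P u) ^ lam ≤ mw P lam β u * (r - u) ^ β := by
  obtain ⟨a, b, c, d, e⟩ := pr_nx P h0 (hur.trans h1)
  have hpos : 0 < nx P u - u := by linarith
  calc (u - pr P u) ^ lam ≤ (nx P u - pr P u) ^ lam := by
        apply Real.rpow_le_rpow <;> linarith
    _ = (nx P u - pr P u) ^ lam * ((nx P u - u) ^ (-β) * (nx P u - u) ^ β) := by
        rw [← Real.rpow_add hpos]; simp
    _ ≤ (nx P u - pr P u) ^ lam * ((nx P u - u) ^ (-β) * (r - u) ^ β) := by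
        have := Real.rpow_nonneg (show 0 ≤ nx P u - pr P u by linarith) lam
        gcongr
    _ = _ := by unfold mw; ring

theorem step_incr {T : ℝ} (P : Partition T) {lam β u r : ℝ} (hlam : 0 < lam) (hlam1 : lam ≤ 1)
    (hβ : 0 ≤ β) (hβl : β ≤ lam)
    (h0 : 0 ≤ u) (hur : u < r) (h1 : r < T) :
    |pr P r - pr P u| ^ lam ≤ (T ^ (lam - β) + mw P lam β u) * (r - u) ^ β := by
  obtain ⟨a, b, c, d, e⟩ := pr_nx P h0 (hur.trans h1)
  obtain ⟨a', b', c', d', e'⟩ := pr_nx P (h0.trans hur.le) h1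
  have hm := mw_nonneg P lam β h0 (hur.trans h1)
  have hT := Real.rpow_nonneg (show 0 ≤ T by linarith) (lam - β)
  have hru := Real.rpow_nonneg (show 0 ≤ r - u by linarith) β
  rcases pr_cases P h0 hur h1 with ⟨h, h'⟩ | h
  · rw [h, sub_self, abs_zero, Real.zero_rpow hlam.ne']
    positivity
  · have h2 := jump_le P hlam.le hβ h0 hur h1 (h.trans b')
    have h3 := rpow_split (show 0 < r - u by linarith) (show r - u ≤ T by linarith) hβl
    have h4 : |pr P r - pr P u| ^ lam ≤ (r - u) ^ lam + (u - pr P u) ^ lam := by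
      rw [abs_of_nonneg (by linarith)]
      refine le_trans ?_ (Real.rpow_add_le_add_rpow (by linarith) (by linarith) hlam.le hlam1)
      apply Real.rpow_le_rpow <;> linarith
    nlinarith

theorem diff_incr {E : Type*} [NormedAddCommGroup E] [NormedSpace ℝ E]
    {T : ℝ} (P : Partition T) {lam β u r d M : ℝ} (hlam : 0 ≤ lam)
    (hβ : 0 ≤ β) (hβl : β ≤ lam) (hd : P.mesh ≤ d) (hM : 0 ≤ M)
    (φ : ℝ → E) (hφ : ∀ x ∈ Icc (0:ℝ) T, ∀ y ∈ Icc (0:ℝ) T, ‖φ x - φ y‖ ≤ M * |x - y| ^ lam)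
    (h0 : 0 ≤ u) (hur : u < r) (h1 : r < T) :
    ‖(φ (pr P r) - φ r) - (φ (pr P u) - φ u)‖ ≤
      M * ((d ^ (lam - β) + mw P lam β u) * (r - u) ^ β) := by
  obtain ⟨a, b, c, d1, e⟩ := pr_nx P h0 (hur.trans h1)
  obtain ⟨a', b', c', d', e'⟩ := pr_nx P (h0.trans hur.le) h1
  have hm := mw_nonneg P lam β h0 (hur.trans h1)
  have hd0 : 0 < d := by linarith
  have hη := Real.rpow_nonneg hd0.le (lam - β)
  have hru := Real.rpow_nonneg (show 0 ≤ r - u by linarith) β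
  rcases pr_cases P h0 hur h1 with ⟨h, h'⟩ | h
  · rw [h]
    have h5 : (φ (pr P u) - φ r) - (φ (pr P u) - φ u) = φ u - φ r := by abel
    rw [h5]
    refine (hφ u ⟨by linarith, by linarith⟩ r ⟨by linarith, by linarith⟩).trans ?_
    rw [abs_sub_comm, abs_of_pos (by linarith)]
    have h3 := rpow_split (show 0 < r - u by linarith) (show r - u ≤ d by linarith) hβl
    gcongr
    nlinarith
  · have h2 := jump_le P hlam hβ h0 hur h1 (h.trans b')
    have h3 : (r - pr P r) ^ lam ≤ d ^ (lam - β) * (r - u) ^ β := by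
      rcases b'.eq_or_lt with h6 | h6
      · rw [h6, sub_self]
        rcases hlam.eq_or_lt with h7 | h7
        · obtain rfl : β = 0 := by linarith
          rw [← h7]; simp
        · rw [Real.zero_rpow h7.ne']; positivity
      · refine (rpow_split (show 0 < r - pr P r by linarith)
          (show r - pr P r ≤ d by linarith) hβl).trans ?_
        gcongr
        linarith
    have h4 := hφ (pr P r) ⟨by linarith, by linarith⟩ r ⟨by linarith, by linarith⟩
    have h5 := hφ (pr P u) ⟨by linarith, by linarith⟩ u ⟨by linarith, by linarith⟩
    rw [abs_sub_comm, abs_of_nonneg (by linarith)] at h4 h5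
    have h6 := norm_sub_le (φ (pr P r) - φ r) (φ (pr P u) - φ u)
    have h7 : M * (r - pr P r) ^ lam + M * (u - pr P u) ^ lam ≤
      M * ((d ^ (lam - β) + mw P lam β u) * (r - u) ^ β) := by
      rw [← mul_add]; gcongr; linarith
    linarith

/-- The A operator bound. -/
theorem sing_int {T α β C u : ℝ} (hαβ : α < β) (h1 : u < T) :
    IntervalIntegrable (fun r => C * (r - u) ^ (β - α - 1)) volume u T ∧
    ∫ r in u..T, C * (r - u) ^ (β - α - 1) = C * ((T - u) ^ (β - α) / (β - α)) := by
  have hi : IntervalIntegrable (fun r : ℝ => r ^ (β - α - 1)) volume 0 (T - u) :=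
    intervalIntegral.intervalIntegrable_rpow' (by linarith)
  constructor
  · have := (hi.comp_sub_right u).const_mul C
    simpa using this
  · rw [intervalIntegral.integral_const_mul,
      intervalIntegral.integral_comp_sub_right (fun r => r ^ (β - α - 1)) u,
      integral_rpow (Or.inl (by linarith)), sub_self]
    congr 1
    rw [sub_add_cancel, Real.zero_rpow (by linarith), sub_zero]

theorem sing_bound {E : Type*} [NormedAddCommGroup E] [NormedSpace ℝ E]
    {T α β C u : ℝ} (hαβ : α < β) (h0 : 0 ≤ u) (h1 : u < T) (hC : 0 ≤ C)
    (f : ℝ → E) (hf : ∀ r, u < r → r < T → ‖f r‖ ≤ C * ((r - u) ^ (-(α + 1)) * (r - u) ^ β)) :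
    ‖∫ r in u..T, f r‖ ≤ C * (T ^ (β - α) / (β - α)) := by
  obtain ⟨hi, he⟩ := sing_int (C := C) hαβ h1
  have h2 : ‖∫ r in u..T, f r‖ ≤ ∫ r in u..T, C * (r - u) ^ (β - α - 1) := by
    apply intervalIntegral.norm_integral_le_of_norm_le h1.le _ hi
    have : ∀ᵐ r : ℝ, r ≠ T := by simp [ae_iff]
    filter_upwards [this] with r hr hr2
    have := hf r hr2.1 (lt_of_le_of_ne hr2.2 hr)
    rwa [← Real.rpow_add (by linarith [hr2.1]),
      show -(α + 1) + β = β - α - 1 by ring] at this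
  refine h2.trans ?_
  rw [he]
  gcongr <;> linarith

theorem AK_bound {E : Type*} [NormedAddCommGroup E] [NormedSpace ℝ E]
    {T α β C M u : ℝ} {K K' : ℝ → ℝ → ℝ} (hA : CondA T α C K K')
    (hαβ : α < β) (h0 : 0 < u) (h1 : u < T) (hC : 0 ≤ C) (hM : 0 ≤ M)
    (φ : ℝ → E) (hf : ∀ r, u < r → r < T → ‖φ r - φ u‖ ≤ M * (r - u) ^ β) :
    ‖AK T K' φ u‖ ≤ M * (C * (T ^ (β - α) / (β - α))) := by
  have := sing_bound (E := E) hαβ h0.le h1 (mul_nonneg hM hC) (fun r => K' r u • (φ r - φ u)) ?_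
  · unfold AK; linarith
  · intro r hr hrT
    have h2 := (hA.2 u r h0 hr hrT.le).2
    have h3 := hf r hr hrT
    rw [norm_smul, Real.norm_eq_abs]
    calc _ ≤ (C * (r - u) ^ (-(α + 1))) * (M * (r - u) ^ β) := by
          gcongr
      _ = _ := by ring

theorem BK_bound {E : Type*} [NormedAddCommGroup E] [NormedSpace ℝ E]
    {T α β C M u v : ℝ} {K K' : ℝ → ℝ → ℝ} (hA : CondA T α C K K')
    (hαβ : α < β) (h0 : 0 < u) (h1 : u < T) (h0' : 0 < v) (h1' : v < T) (hC : 0 ≤ C) (hM : 0 ≤ M)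
    (ψ : ℝ → ℝ → E) (hf : ∀ r₁ r₂, u < r₁ → r₁ < T → v < r₂ → r₂ < T →
      ‖rectInc ψ u r₁ v r₂‖ ≤ M * ((r₁ - u) ^ β * (r₂ - v) ^ β)) :
    ‖BK T K' ψ u v‖ ≤ M * (C * (T ^ (β - α) / (β - α))) ^ 2 := by
  set c := T ^ (β - α) / (β - α) with hc
  have hc0 : 0 ≤ c := div_nonneg (Real.rpow_nonneg (by linarith) _) (by linarith)
  have := sing_bound (E := E) (C := M * C * C * c) hαβ h0'.le h1' (by positivity)
    (fun r₂ => ∫ r₁ in u..T, (K' r₁ u * K' r₂ v) • rectInc ψ u r₁ v r₂) ?_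
  · unfold BK; rw [← hc] at this; linarith
  · intro r₂ hr₂ hr₂T
    have p2 := Real.rpow_nonneg (show 0 ≤ r₂ - v by linarith) β
    have q2 := Real.rpow_nonneg (show 0 ≤ r₂ - v by linarith) (-(α+1))
    have := sing_bound (E := E) (C := M * C * C * ((r₂ - v) ^ (-(α+1)) * (r₂ - v) ^ β))
      hαβ h0.le h1 (by positivity)
      (fun r₁ => (K' r₁ u * K' r₂ v) • rectInc ψ u r₁ v r₂) ?_
    · rw [← hc] at this; linarith
    · intro r₁ hr₁ hr₁T
      have h2 := (hA.2 u r₁ h0 hr₁ hr₁T.le).2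
      have h2' := (hA.2 v r₂ h0' hr₂ hr₂T.le).2
      have h3 := hf r₁ r₂ hr₁ hr₁T hr₂ hr₂T
      rw [norm_smul, Real.norm_eq_abs, abs_mul]
      have a1 := (abs_nonneg _).trans h2
      have a2 := (abs_nonneg _).trans h2'
      calc _ ≤ ((C * (r₁ - u) ^ (-(α + 1))) * (C * (r₂ - v) ^ (-(α + 1)))) *
            (M * ((r₁ - u) ^ β * (r₂ - v) ^ β)) := by
            gcongr
        _ = _ := by ring

theorem mw_cell {T : ℝ} (P : Partition T) (lam β : ℝ) {i : ℕ} (hi : i < P.n) {u : ℝ}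
    (hu : u ∈ Ioo (P.pts i) (P.pts (i + 1))) :
    mw P lam β u ^ 2 = ((P.pts (i + 1) - P.pts i) ^ lam) ^ 2 *
      (P.pts (i + 1) - u) ^ (-(2 * β)) := by
  have : idx P u = i := idx_eq P ⟨hi, hu.1.le, hu.2⟩
  unfold mw nx pr
  rw [this, mul_pow, ← Real.rpow_mul_natCast (x := P.pts (i + 1) - u) (by linarith [hu.2])]
  congr 2
  push_cast; ring

theorem mw_cell_int {T : ℝ} (P : Partition T) {lam β d : ℝ} (hβ : β < 1 / 2) (hβl : β ≤ lam)
    (hd : P.mesh ≤ d) {i : ℕ} (hi : i < P.n) :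
    IntervalIntegrable (fun u => mw P lam β u ^ 2) volume (P.pts i) (P.pts (i + 1)) ∧
    ∫ u in (P.pts i)..(P.pts (i + 1)), mw P lam β u ^ 2 ≤
      (d ^ (lam - β)) ^ 2 * (P.pts (i + 1) - P.pts i) / (1 - 2 * β) := by
  have hlt := P.lt i hi
  have hm := incr_le_mesh P hi
  set a := P.pts i with ha
  set b := P.pts (i + 1) with hb
  have h1 : IntervalIntegrable (fun u => ((b - a) ^ lam) ^ 2 * (b - u) ^ (-(2 * β)))
      volume a b := by
    have hi : IntervalIntegrable (fun r : ℝ => r ^ (-(2 * β))) volume (b - a) 0 :=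
      (intervalIntegral.intervalIntegrable_rpow' (by linarith)).symm
    have := (hi.comp_sub_left b).const_mul (((b - a) ^ lam) ^ 2)
    simpa using this
  have hae : ∀ᵐ u : ℝ, u ∈ uIoc a b → mw P lam β u ^ 2 =
      ((b - a) ^ lam) ^ 2 * (b - u) ^ (-(2 * β)) := by
    have : ∀ᵐ r : ℝ, r ≠ b := by simp [ae_iff]
    filter_upwards [this] with u hu hu2
    rw [uIoc_of_le hlt.le] at hu2
    exact mw_cell P lam β hi ⟨hu2.1, lt_of_le_of_ne hu2.2 hu⟩
  constructor
  · refine h1.congr_ae ?_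
    rw [Filter.EventuallyEq, ae_restrict_iff' measurableSet_uIoc]
    filter_upwards [hae] with u hu hu2
    exact (hu hu2).symm
  · rw [intervalIntegral.integral_congr_ae hae, intervalIntegral.integral_const_mul,
      intervalIntegral.integral_comp_sub_left (fun r => r ^ (-(2 * β))) b,
      integral_rpow (Or.inl (by linarith)), sub_self, Real.zero_rpow (by linarith), sub_zero]
    have hx : 0 < b - a := by linarith
    have e : ((b - a) ^ lam) ^ 2 * ((b - a) ^ (-(2 * β) + 1) / (-(2 * β) + 1)) =
        ((b - a) ^ (lam - β)) ^ 2 * (b - a) / (1 - 2 * β) := by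
      rw [show -(2 * β) + 1 = 1 - 2 * β by ring, ← mul_div_assoc]
      congr 1
      rw [← Real.rpow_mul_natCast hx.le, ← Real.rpow_mul_natCast hx.le, ← Real.rpow_add hx]
      nth_rewrite 3 [← Real.rpow_one (b - a)]
      rw [← Real.rpow_add hx]
      congr 1
      push_cast; ring
    rw [e]
    gcongr
    · linarith
    · linarith

theorem mw_int {T : ℝ} (P : Partition T) {lam β d : ℝ} (hβ : β < 1 / 2) (hβl : β ≤ lam)
    (hd : P.mesh ≤ d) :
    IntervalIntegrable (fun u => mw P lam β u ^ 2) volume 0 T ∧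
    ∫ u in (0:ℝ)..T, mw P lam β u ^ 2 ≤ (d ^ (lam - β)) ^ 2 * (T / (1 - 2 * β)) := by
  have h := fun i (hi : i < P.n) => mw_cell_int P hβ hβl hd hi
  have h1 := IntervalIntegrable.trans_iterate (n := P.n) (fun i hi => (h i hi).1)
  have h2 := intervalIntegral.sum_integral_adjacent_intervals (n := P.n) (fun i hi => (h i hi).1)
  rw [P.first, P.last] at h1 h2
  refine ⟨h1, ?_⟩
  rw [← h2]
  refine (Finset.sum_le_sum fun i hi => (h i (Finset.mem_range.1 hi)).2).trans ?_
  rw [← Finset.sum_div, ← Finset.mul_sum, Finset.sum_range_sub, P.first, P.last, sub_zero,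
    mul_div_assoc]

theorem K_sq_bound {T α C u : ℝ} {K K' : ℝ → ℝ → ℝ} (hA : CondA T α C K K') (h0 : 0 < u)
    (h1 : u < T) : 1 + |K T u| ^ 2 ≤
      1 + C ^ 2 * (u ^ (-(4 * α)) + (T - u) ^ (-(4 * α))) := by
  have h := hA.1 u T h0 h1 le_rfl
  have e1 : u ^ (-(4 * α)) = (u ^ (-α)) ^ 4 := by
    rw [← Real.rpow_mul_natCast h0.le]; congr 1; push_cast; ring
  have e2 : (T - u) ^ (-(4 * α)) = ((T - u) ^ (-α)) ^ 4 := by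
    rw [← Real.rpow_mul_natCast (by linarith)]; congr 1; push_cast; ring
  rw [e1, e2]
  set x := u ^ (-α)
  set y := (T - u) ^ (-α)
  have h2 : |K T u| ^ 2 ≤ (C * x * y) ^ 2 := by gcongr
  have h3 : x ^ 2 * y ^ 2 ≤ x ^ 4 + y ^ 4 := by nlinarith [sq_nonneg (x ^ 2 - y ^ 2), sq_nonneg (x^2), sq_nonneg (y^2)]
  nlinarith [mul_le_mul_of_nonneg_left h3 (sq_nonneg C)]

theorem W_int {T α C : ℝ} (hα' : α < 1 / 4) :
    IntervalIntegrable (fun u => 1 + C ^ 2 * (u ^ (-(4 * α)) + (T - u) ^ (-(4 * α))))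
      volume 0 T := by
  have h1 : IntervalIntegrable (fun r : ℝ => r ^ (-(4 * α))) volume 0 T :=
    intervalIntegral.intervalIntegrable_rpow' (by linarith)
  have h2 : IntervalIntegrable (fun r : ℝ => (T - r) ^ (-(4 * α))) volume 0 T := by
    have := (h1.symm.comp_sub_left T)
    simpa using this
  exact intervalIntegrable_const.add ((h1.add h2).const_mul _)

theorem alg1 {k l a b η η' C1 Cψ L : ℝ} (hk : 0 ≤ k) (hl : 0 ≤ l) (ha : 0 ≤ a) (hb : 0 ≤ b)
    (hη : 0 ≤ η) (hη' : η' ≤ η) (hC1 : 0 ≤ C1) (hC : 0 ≤ Cψ) (hL : 0 ≤ L) :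
    k * l * (2 * Cψ * η') + l * ((Cψ * (η + a) + Cψ * L * η) * C1) +
      k * ((Cψ * (η + b) + Cψ * L * η) * C1) +
      (Cψ * ((η + a) * (L + b)) + Cψ * L * (η + b)) * C1 ^ 2 ≤
    (Cψ * (2 + (1 + L) * C1 + (1 + L) * C1 ^ 2)) *
      ((η + η * k + a) * (1 + l + b) + (1 + k + a) * (η + η * l + b)) := by
  set X := (η + η * k + a) * (1 + l + b) with hX
  set Y := (1 + k + a) * (η + η * l + b) with hY
  have hX0 : 0 ≤ X := by positivity
  have hY0 : 0 ≤ Y := by positivity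
  have e1 : k * l * η' ≤ X := by
    have : k * l * η' ≤ k * l * η := by gcongr
    have : 0 ≤ X - k * l * η := by
      rw [hX]; ring_nf; positivity
    linarith
  have e2 : l * (η + a) ≤ X := by
    have : 0 ≤ X - l * (η + a) := by rw [hX]; ring_nf; positivity
    linarith
  have e3 : l * η ≤ X := by nlinarith
  have e4 : k * (η + b) ≤ Y := by
    have : 0 ≤ Y - k * (η + b) := by rw [hY]; ring_nf; positivity
    linarith
  have e5 : k * η ≤ Y := by nlinarith
  have e6 : η + a ≤ X := by
    have : 0 ≤ X - (η + a) := by rw [hX]; ring_nf; positivity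
    linarith
  have e7 : (η + a) * b ≤ X := by
    have : 0 ≤ X - (η + a) * b := by rw [hX]; ring_nf; positivity
    linarith
  have e8 : η + b ≤ Y := by
    have : 0 ≤ Y - (η + b) := by rw [hY]; ring_nf; positivity
    linarith
  have f1 := mul_le_mul_of_nonneg_left e1 (show 0 ≤ 2 * Cψ by positivity)
  have f2 := mul_le_mul_of_nonneg_left e2 (show 0 ≤ Cψ * C1 by positivity)
  have f3 := mul_le_mul_of_nonneg_left e3 (show 0 ≤ Cψ * C1 * L by positivity)
  have f4 := mul_le_mul_of_nonneg_left e4 (show 0 ≤ Cψ * C1 by positivity)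
  have f5 := mul_le_mul_of_nonneg_left e5 (show 0 ≤ Cψ * C1 * L by positivity)
  have f6 := mul_le_mul_of_nonneg_left e6 (show 0 ≤ Cψ * C1 ^ 2 * L by positivity)
  have f7 := mul_le_mul_of_nonneg_left e7 (show 0 ≤ Cψ * C1 ^ 2 by positivity)
  have f8 := mul_le_mul_of_nonneg_left e8 (show 0 ≤ Cψ * C1 ^ 2 * L by positivity)
  have g1 : 0 ≤ Cψ * Y := by positivity
  have g2 : 0 ≤ Cψ * C1 ^ 2 * Y := by positivity
  linarith

theorem alg2 {N c k l a b η w z : ℝ} (hN : 0 ≤ N)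
    (hw : 1 + k ^ 2 ≤ w) (hz : 1 + l ^ 2 ≤ z)
    (h : N ≤ c * ((η + η * k + a) * (1 + l + b) + (1 + k + a) * (η + η * l + b))) :
    N ^ 2 ≤ 18 * c ^ 2 * ((η ^ 2 * w + a ^ 2) * (z + b ^ 2) + (w + a ^ 2) * (η ^ 2 * z + b ^ 2)) := by
  have three : ∀ x y t : ℝ, (x + y + t) ^ 2 ≤ 3 * (x ^ 2 + y ^ 2 + t ^ 2) := fun x y t => by
    nlinarith [sq_nonneg (x - y), sq_nonneg (y - t), sq_nonneg (x - t)]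
  have two : ∀ p q : ℝ, (p + q) ^ 2 ≤ 2 * (p ^ 2 + q ^ 2) := fun p q => by
    nlinarith [sq_nonneg (p - q)]
  have A1 : (η + η * k + a) ^ 2 ≤ 3 * (η ^ 2 * w + a ^ 2) := by
    have := three η (η * k) a
    nlinarith [mul_le_mul_of_nonneg_left hw (sq_nonneg η)]
  have A2 : (η + η * l + b) ^ 2 ≤ 3 * (η ^ 2 * z + b ^ 2) := by
    have := three η (η * l) b
    nlinarith [mul_le_mul_of_nonneg_left hz (sq_nonneg η)]
  have A3 : (1 + k + a) ^ 2 ≤ 3 * (w + a ^ 2) := by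
    have := three 1 k a
    nlinarith
  have A4 : (1 + l + b) ^ 2 ≤ 3 * (z + b ^ 2) := by
    have := three 1 l b
    nlinarith
  have B1 := mul_le_mul A1 A4 (sq_nonneg _) ((sq_nonneg _).trans A1)
  have B2 := mul_le_mul A3 A2 (sq_nonneg _) ((sq_nonneg _).trans A3)
  generalize η + η * k + a = x at *
  generalize 1 + l + b = y at *
  generalize 1 + k + a = s at *
  generalize η + η * l + b = t at *
  have h1 : N ^ 2 ≤ (c * (x * y + s * t)) ^ 2 := by gcongr
  have h2 : (x * y + s * t) ^ 2 ≤ 2 * (x ^ 2 * y ^ 2 + s ^ 2 * t ^ 2) := by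
    have := two (x * y) (s * t)
    rwa [mul_pow, mul_pow] at this
  have h3 := mul_le_mul_of_nonneg_left (h2.trans (mul_le_mul_of_nonneg_left (add_le_add B1 B2) (by norm_num : (0:ℝ) ≤ 2))) (sq_nonneg c)
  rw [mul_pow] at h1
  refine (h1.trans h3).trans (le_of_eq ?_)
  ring

theorem dist_pr {T : ℝ} (P : Partition T) {lam β u d : ℝ} (hlam : 0 ≤ lam) (hβ : 0 ≤ β)
    (hd : P.mesh ≤ d) (hd1 : d ≤ 1) (h0 : 0 ≤ u) (h1 : u < T) :
    |pr P u - u| ^ lam ≤ d ^ (lam - β) := by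
  obtain ⟨a, b, c, d1, e⟩ := pr_nx P h0 h1
  rw [abs_sub_comm, abs_of_nonneg (by linarith)]
  calc (u - pr P u) ^ lam ≤ d ^ lam := by
        apply Real.rpow_le_rpow <;> linarith
    _ ≤ _ := Real.rpow_le_rpow_of_exponent_ge (by linarith) hd1 (by linarith)

theorem ptwise {E : Type*} [NormedAddCommGroup E] [NormedSpace ℝ E]
    {T α β lam C Cψ d u v : ℝ} {K K' : ℝ → ℝ → ℝ} (hA : CondA T α C K K') (ψ : ℝ → ℝ → E)
    (hψ : IsStrongHolderBiWith T lam Cψ ψ) (P Q : Partition T) (hP : P.mesh ≤ d)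
    (hQ : Q.mesh ≤ d) (hd1 : d ≤ 1) (hβ : 0 ≤ β) (hαβ : α < β) (hβl : β ≤ lam)
    (hlam : 0 < lam) (hlam1 : lam ≤ 1) (hC : 0 ≤ C) (hCψ : 0 ≤ Cψ)
    (hu0 : 0 < u) (hu1 : u < T) (hv0 : 0 < v) (hv1 : v < T) :
    ‖KstarT T K K' (fun x y => step2 P Q ψ x y - ψ x y) u v‖ ≤
      |K T u| * |K T v| * (2 * Cψ * d ^ (lam - β)) +
      |K T v| * ((Cψ * (d ^ (lam - β) + mw P lam β u) + Cψ * T ^ (lam - β) * d ^ (lam - β)) *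
        (C * (T ^ (β - α) / (β - α)))) +
      |K T u| * ((Cψ * (d ^ (lam - β) + mw Q lam β v) + Cψ * T ^ (lam - β) * d ^ (lam - β)) *
        (C * (T ^ (β - α) / (β - α)))) +
      (Cψ * ((d ^ (lam - β) + mw P lam β u) * (T ^ (lam - β) + mw Q lam β v)) +
        Cψ * T ^ (lam - β) * (d ^ (lam - β) + mw Q lam β v)) *
        (C * (T ^ (β - α) / (β - α))) ^ 2 := by
  obtain ⟨⟨hψ1, hψ2⟩, hψ3⟩ := hψ
  have hT : 0 < T := hu0.trans hu1
  have hma := mw_nonneg P lam β hu0.le hu1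
  have hmb := mw_nonneg Q lam β hv0.le hv1
  obtain ⟨pu0, pu1, pu2, pu3, pu4⟩ := pr_nx P hu0.le hu1
  obtain ⟨qv0, qv1, qv2, qv3, qv4⟩ := pr_nx Q hv0.le hv1
  have hd0 : 0 < d := by linarith
  have hη : 0 ≤ d ^ (lam - β) := Real.rpow_nonneg hd0.le _
  have hL : 0 ≤ T ^ (lam - β) := Real.rpow_nonneg hT.le _
  have hdu := dist_pr P hlam.le hβ hP hd1 hu0.le hu1
  have hdv := dist_pr Q hlam.le hβ hQ hd1 hv0.le hv1
  have mem : ∀ {x : ℝ}, 0 ≤ x → x ≤ T → x ∈ Icc (0:ℝ) T := fun a b => ⟨a, b⟩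
  set η := d ^ (lam - β) with hηd
  set L := T ^ (lam - β) with hLd
  -- diagonal term
  have t1 : ‖step2 P Q ψ u v - ψ u v‖ ≤ 2 * Cψ * η := by
    rw [step2_eq P Q ψ hu0.le hu1 hv0.le hv1]
    have e : ψ (pr P u) (pr Q v) - ψ u v =
      (ψ (pr P u) (pr Q v) - ψ u (pr Q v)) + (ψ u (pr Q v) - ψ u v) := by abel
    rw [e]
    have h1 := hψ1 u (mem hu0.le hu1.le) (pr P u) (mem pu0 (by linarith)) (pr Q v)
      (mem qv0 (by linarith))
    have h2 := hψ2 u (mem hu0.le hu1.le) v (mem hv0.le hv1.le) (pr Q v) (mem qv0 (by linarith))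
    have h3 := mul_le_mul_of_nonneg_left hdu hCψ
    have h4 := mul_le_mul_of_nonneg_left hdv hCψ
    refine (norm_add_le _ _).trans ?_
    linarith
  -- A in u
  have t2 : ‖AK T K' (fun x => step2 P Q ψ x v - ψ x v) u‖ ≤
      (Cψ * (η + mw P lam β u) + Cψ * L * η) * (C * (T ^ (β - α) / (β - α))) := by
    apply AK_bound hA hαβ hu0 hu1 hC (by positivity)
    intro r hr hrT
    have hr0 : 0 ≤ r := by linarith
    try simp only []
    rw [step2_eq P Q ψ hu0.le hu1 hv0.le hv1, step2_eq P Q ψ hr0 hrT hv0.le hv1]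
    have e : ψ (pr P r) (pr Q v) - ψ r v - (ψ (pr P u) (pr Q v) - ψ u v) =
        ((ψ (pr P r) (pr Q v) - ψ r (pr Q v)) - (ψ (pr P u) (pr Q v) - ψ u (pr Q v))) +
        rectInc ψ u r v (pr Q v) := by unfold rectInc; abel
    rw [e]
    have h1 := diff_incr P hlam.le hβ hβl hP hCψ (fun x => ψ x (pr Q v))
      (fun x hx y hy => hψ1 y hy x hx _ (mem qv0 (by linarith))) hu0.le hr hrT
    have h2 := hψ3 u (mem hu0.le hu1.le) r (mem hr0 hrT.le) v (mem hv0.le hv1.le) (pr Q v)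
      (mem qv0 (by linarith))
    have h3 := rpow_split (show 0 < r - u by linarith) (show r - u ≤ T by linarith) hβl
    rw [abs_of_pos (show 0 < r - u by linarith)] at h2
    have hrb := Real.rpow_nonneg (show 0 ≤ r - u by linarith) β
    have h4 : Cψ * (r - u) ^ lam * |pr Q v - v| ^ lam ≤ Cψ * (L * (r - u) ^ β) * η := by gcongr
    refine (norm_add_le _ _).trans ?_
    try simp only [] at h1
    linarith
  have t3 : ‖AK T K' (fun y => step2 P Q ψ u y - ψ u y) v‖ ≤
      (Cψ * (η + mw Q lam β v) + Cψ * L * η) * (C * (T ^ (β - α) / (β - α))) := by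
    apply AK_bound hA hαβ hv0 hv1 hC (by positivity)
    intro r hr hrT
    have hr0 : 0 ≤ r := by linarith
    try simp only []
    rw [step2_eq P Q ψ hu0.le hu1 hv0.le hv1, step2_eq P Q ψ hu0.le hu1 hr0 hrT]
    have e : ψ (pr P u) (pr Q r) - ψ u r - (ψ (pr P u) (pr Q v) - ψ u v) =
        ((ψ (pr P u) (pr Q r) - ψ (pr P u) r) - (ψ (pr P u) (pr Q v) - ψ (pr P u) v)) +
        rectInc ψ u (pr P u) v r := by unfold rectInc; abel
    rw [e]
    have h1 := diff_incr Q hlam.le hβ hβl hQ hCψ (fun y => ψ (pr P u) y)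
      (fun x hx y hy => hψ2 _ (mem pu0 (by linarith)) y hy x hx) hv0.le hr hrT
    have h2 := hψ3 u (mem hu0.le hu1.le) (pr P u) (mem pu0 (by linarith)) v (mem hv0.le hv1.le) r
      (mem hr0 hrT.le)
    have h3 := rpow_split (show 0 < r - v by linarith) (show r - v ≤ T by linarith) hβl
    rw [abs_of_pos (show 0 < r - v by linarith)] at h2
    have hrb := Real.rpow_nonneg (show 0 ≤ r - v by linarith) β
    have h4 : Cψ * |pr P u - u| ^ lam * (r - v) ^ lam ≤ Cψ * η * (L * (r - v) ^ β) := by gcongr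
    refine (norm_add_le _ _).trans ?_
    try simp only [] at h1
    linarith
  have t4 : ‖BK T K' (fun x y => step2 P Q ψ x y - ψ x y) u v‖ ≤
      (Cψ * ((η + mw P lam β u) * (L + mw Q lam β v)) + Cψ * L * (η + mw Q lam β v)) *
        (C * (T ^ (β - α) / (β - α))) ^ 2 := by
    apply BK_bound hA hαβ hu0 hu1 hv0 hv1 hC (by positivity)
    intro r s hr hrT hs hsT
    have hr0 : 0 ≤ r := by linarith
    have hs0 : 0 ≤ s := by linarith
    obtain ⟨qs0, qs1, qs2, qs3, qs4⟩ := pr_nx Q hs0 hsT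
    have e : rectInc (fun x y => step2 P Q ψ x y - ψ x y) u r v s =
        (((ψ (pr P r) (pr Q s) - ψ (pr P r) (pr Q v)) - (ψ r (pr Q s) - ψ r (pr Q v))) -
        ((ψ (pr P u) (pr Q s) - ψ (pr P u) (pr Q v)) - (ψ u (pr Q s) - ψ u (pr Q v)))) +
        (((ψ r (pr Q s) - ψ u (pr Q s)) - (ψ r s - ψ u s)) -
        ((ψ r (pr Q v) - ψ u (pr Q v)) - (ψ r v - ψ u v))) := by
      unfold rectInc
      try simp only []
      rw [step2_eq P Q ψ hu0.le hu1 hv0.le hv1, step2_eq P Q ψ hu0.le hu1 hs0 hsT,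
        step2_eq P Q ψ hr0 hrT hv0.le hv1, step2_eq P Q ψ hr0 hrT hs0 hsT]
      abel
    rw [e]
    have h1 := diff_incr P (M := Cψ * |pr Q s - pr Q v| ^ lam) hlam.le hβ hβl hP (by positivity)
      (fun x => ψ x (pr Q s) - ψ x (pr Q v))
      (fun x hx y hy => by
        have := hψ3 y hy x hx (pr Q v) (mem qv0 (by linarith)) (pr Q s) (mem qs0 (by linarith))
        have e2 : ψ x (pr Q s) - ψ x (pr Q v) - (ψ y (pr Q s) - ψ y (pr Q v)) =
          rectInc ψ y x (pr Q v) (pr Q s) := by unfold rectInc; abel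
        rw [e2]; linarith) hu0.le hr hrT
    have h2 := diff_incr Q (M := Cψ * |r - u| ^ lam) hlam.le hβ hβl hQ (by positivity)
      (fun y => ψ r y - ψ u y)
      (fun x hx y hy => by
        have := hψ3 u (mem hu0.le hu1.le) r (mem hr0 hrT.le) y hy x hx
        have e2 : ψ r x - ψ u x - (ψ r y - ψ u y) =
          rectInc ψ u r y x := by unfold rectInc; abel
        rw [e2]; linarith) hv0.le hs hsT
    have h3 := rpow_split (show 0 < r - u by linarith) (show r - u ≤ T by linarith) hβl
    have h4 := step_incr Q hlam hlam1 hβ hβl hv0.le hs hsT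
    rw [abs_of_pos (show 0 < r - u by linarith)] at h2
    have hrb := Real.rpow_nonneg (show 0 ≤ r - u by linarith) β
    have hsb := Real.rpow_nonneg (show 0 ≤ s - v by linarith) β
    refine (norm_add_le _ _).trans ((add_le_add h1 h2).trans ?_)
    calc _ ≤ Cψ * ((L + mw Q lam β v) * (s - v) ^ β) * ((η + mw P lam β u) * (r - u) ^ β) +
          Cψ * (L * (r - u) ^ β) * ((η + mw Q lam β v) * (s - v) ^ β) := by gcongr
      _ = _ := by ring
  unfold KstarT
  refine (norm_add_le _ _).trans (add_le_add ((norm_add_le _ _).trans (add_le_add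
    ((norm_add_le _ _).trans (add_le_add ?_ ?_)) ?_)) t4)
  · rw [norm_smul, Real.norm_eq_abs, abs_mul]; gcongr
  · rw [norm_smul, Real.norm_eq_abs]; gcongr
  · rw [norm_smul, Real.norm_eq_abs]; gcongr

theorem int2 {T c η J1 J2 : ℝ} (hT : 0 < T) (hc : 0 ≤ c) (F : ℝ → ℝ → ℝ) (W q1 q2 : ℝ → ℝ)
    (hF0 : ∀ u v, 0 ≤ F u v)
    (hW : IntervalIntegrable W volume 0 T) (h1 : IntervalIntegrable q1 volume 0 T)
    (h2 : IntervalIntegrable q2 volume 0 T)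
    (hJ1 : ∫ u in (0:ℝ)..T, q1 u ≤ η ^ 2 * J1) (hJ2 : ∫ u in (0:ℝ)..T, q2 u ≤ η ^ 2 * J1)
    (hJW : ∫ u in (0:ℝ)..T, W u = J2)
    (hp1 : 0 ≤ ∫ u in (0:ℝ)..T, q1 u) (hp2 : 0 ≤ ∫ u in (0:ℝ)..T, q2 u) (hpW : 0 ≤ J2)
    (hη1 : η ^ 2 ≤ 1) (hJ0 : 0 ≤ J1)
    (hF : ∀ u v, 0 < u → u < T → 0 < v → v < T → F u v ≤
      c * ((η ^ 2 * W u + q1 u) * (W v + q2 v) + (W u + q1 u) * (η ^ 2 * W v + q2 v))) :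
    ∫ u in (0:ℝ)..T, ∫ v in (0:ℝ)..T, F u v ≤ c * (2 * (η ^ 2 * (J1 + J2) * (J1 + J2))) := by
  have hne : ∀ᵐ r : ℝ, r ≠ T := by simp [ae_iff]
  have key : ∀ f g : ℝ → ℝ, (∀ r, 0 ≤ f r) → IntervalIntegrable g volume 0 T →
      (∀ r, 0 < r → r < T → f r ≤ g r) → ∫ r in (0:ℝ)..T, f r ≤ ∫ r in (0:ℝ)..T, g r := by
    intro f g hf hg hfg
    rw [intervalIntegral.integral_of_le hT.le, intervalIntegral.integral_of_le hT.le]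
    apply integral_mono_of_nonneg (Filter.Eventually.of_forall hf)
      ((intervalIntegrable_iff_integrableOn_Ioc_of_le hT.le).1 hg)
    rw [Filter.EventuallyLE, ae_restrict_iff' measurableSet_Ioc]
    filter_upwards [hne] with r hr hr2
    exact hfg r hr2.1 (lt_of_le_of_ne hr2.2 hr)
  set I1 := ∫ u in (0:ℝ)..T, q1 u
  set I2 := ∫ u in (0:ℝ)..T, q2 u
  have inner : ∀ u, 0 < u → u < T → ∫ v in (0:ℝ)..T, F u v ≤
      c * ((η ^ 2 * W u + q1 u) * (J2 + I2) + (W u + q1 u) * (η ^ 2 * J2 + I2)) := by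
    intro u hu0 hu1
    have i1 := (hW.add h2).const_mul (η ^ 2 * W u + q1 u)
    have i2 := ((hW.const_mul (η ^ 2)).add h2).const_mul (W u + q1 u)
    refine (key _ _ (hF0 u) ((i1.add i2).const_mul c) (fun v hv0 hv1 => hF u v hu0 hu1 hv0 hv1)).trans
      (le_of_eq ?_)
    rw [intervalIntegral.integral_const_mul, intervalIntegral.integral_add i1 i2,
      intervalIntegral.integral_const_mul, intervalIntegral.integral_const_mul,
      intervalIntegral.integral_add hW h2, intervalIntegral.integral_add (hW.const_mul _) h2,
      intervalIntegral.integral_const_mul, hJW]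
  have i1 := ((hW.const_mul (η ^ 2)).add h1).mul_const (J2 + I2)
  have i2 := (hW.add h1).mul_const (η ^ 2 * J2 + I2)
  refine (key _ _ (fun u => intervalIntegral.integral_nonneg hT.le fun v _ => hF0 u v)
    ((i1.add i2).const_mul c) inner).trans ?_
  rw [intervalIntegral.integral_const_mul, intervalIntegral.integral_add i1 i2,
      intervalIntegral.integral_mul_const, intervalIntegral.integral_mul_const,
      intervalIntegral.integral_add hW h1, intervalIntegral.integral_add (hW.const_mul _) h1,
      intervalIntegral.integral_const_mul, hJW]
  have b1 : I1 ≤ J1 := by nlinarith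
  have b2 : I2 ≤ J1 := by nlinarith
  calc c * ((η ^ 2 * J2 + I1) * (J2 + I2) + (J2 + I1) * (η ^ 2 * J2 + I2))
      ≤ c * ((η ^ 2 * J2 + η ^ 2 * J1) * (J2 + J1) + (J2 + J1) * (η ^ 2 * J2 + η ^ 2 * J1)) := by
        gcongr
    _ = _ := by ring

/-- Theorem 4.1(i): convergence of `(𝒦*⊗𝒦*)(ψ^π − ψ)` to `0` in
`L²([0,T]²; E)` as the mesh of the grid partition tends to `0`. -/
theorem kstarT_step2_tendsto_L2 {E : Type*} [NormedAddCommGroup E] [NormedSpace ℝ E]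
    [CompleteSpace E] (T α lam : ℝ) (hT : 0 < T) (hα : 0 ≤ α) (hα' : α < 1 / 4)
    (K K' : ℝ → ℝ → ℝ) (hK : IsVolterraKernel K) (hA : ∃ C : ℝ, CondA T α C K K')
    (ψ : ℝ → ℝ → E) (hlam : 0 < lam) (hlam' : lam ≤ 1)
    (hψ : IsStrongHolderBi T lam ψ) (hαlam : α < lam) :
    ∀ ε > 0, ∃ δ > 0, ∀ P Q : Partition T, max P.mesh Q.mesh < δ →
      (∫ u in (0:ℝ)..T, ∫ v in (0:ℝ)..T,
          ‖KstarT T K K' (fun x y => step2 P Q ψ x y - ψ x y) u v‖ ^ 2) < ε := by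
  obtain ⟨C, hA⟩ := hA
  obtain ⟨Cψ, hψ⟩ := hψ
  have hC : 0 ≤ C := by
    have h := (hA.2 (T / 2) T (by linarith) (by linarith) le_rfl).2
    have h2 : 0 < (T - T / 2) ^ (-(α + 1)) := Real.rpow_pos_of_pos (by linarith) _
    by_contra! hc
    nlinarith [abs_nonneg (K' T (T / 2))]
  have hCψ : 0 ≤ Cψ := by
    have h := hψ.1.1 0 ⟨le_rfl, hT.le⟩ T ⟨hT.le, le_rfl⟩ 0 ⟨le_rfl, hT.le⟩
    rw [sub_zero, abs_of_pos hT] at h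
    have h2 : 0 < T ^ lam := Real.rpow_pos_of_pos hT _
    by_contra! hc
    nlinarith [norm_nonneg (ψ T 0 - ψ 0 0)]
  obtain ⟨β, hαβ, hβ⟩ : ∃ β, α < β ∧ β < min lam (1 / 4) :=
    exists_between (lt_min hαlam hα')
  have hβl : β < lam := hβ.trans_le (min_le_left _ _)
  have hβ4 : β < 1 / 4 := hβ.trans_le (min_le_right _ _)
  have hβ0 : 0 ≤ β := by linarith
  have hWi := W_int (T := T) (C := C) hα'
  set W : ℝ → ℝ := fun u => 1 + C ^ 2 * (u ^ (-(4 * α)) + (T - u) ^ (-(4 * α))) with hW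
  set J2 := ∫ u in (0:ℝ)..T, W u with hJ2
  have hJ2p : 0 ≤ J2 := by
    apply intervalIntegral.integral_nonneg hT.le
    intro u hu
    have := Real.rpow_nonneg hu.1 (-(4 * α))
    have := Real.rpow_nonneg (show 0 ≤ T - u by linarith [hu.2]) (-(4 * α))
    simp only [hW]
    positivity
  set J1 := T / (1 - 2 * β) with hJ1
  have hJ1p : 0 ≤ J1 := div_nonneg hT.le (by linarith)
  set C1 := C * (T ^ (β - α) / (β - α)) with hC1
  have hC1p : 0 ≤ C1 :=
    mul_nonneg hC (div_nonneg (Real.rpow_nonneg hT.le _) (by linarith))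
  have hL : 0 ≤ T ^ (lam - β) := Real.rpow_nonneg hT.le _
  set c := Cψ * (2 + (1 + T ^ (lam - β)) * C1 + (1 + T ^ (lam - β)) * C1 ^ 2) with hc
  have main : ∀ d : ℝ, 0 < d → d ≤ 1 → ∀ P Q : Partition T, P.mesh ≤ d → Q.mesh ≤ d →
      (∫ u in (0:ℝ)..T, ∫ v in (0:ℝ)..T,
          ‖KstarT T K K' (fun x y => step2 P Q ψ x y - ψ x y) u v‖ ^ 2) ≤
        18 * c ^ 2 * (2 * ((d ^ (lam - β)) ^ 2 * (J1 + J2) * (J1 + J2))) := by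
    intro d hd0 hd1 P Q hP hQ
    have hη : 0 ≤ d ^ (lam - β) := Real.rpow_nonneg hd0.le _
    have hη1 : d ^ (lam - β) ≤ 1 := Real.rpow_le_one hd0.le hd1 (by linarith)
    obtain ⟨iP, jP⟩ := mw_int P (show β < 1 / 2 by linarith) hβl.le hP
    obtain ⟨iQ, jQ⟩ := mw_int Q (show β < 1 / 2 by linarith) hβl.le hQ
    apply int2 hT (by positivity) _ W _ _ (fun u v => sq_nonneg _) hWi iP iQ jP jQ rfl
      (intervalIntegral.integral_nonneg hT.le fun u _ => sq_nonneg _)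
      (intervalIntegral.integral_nonneg hT.le fun u _ => sq_nonneg _) hJ2p
      (pow_le_one₀ hη hη1) hJ1p
    intro u v hu0 hu1 hv0 hv1
    refine alg2 (norm_nonneg _) (K_sq_bound hA hu0 hu1) (K_sq_bound hA hv0 hv1) ?_
    refine (ptwise hA ψ hψ P Q hP hQ hd1 hβ0 hαβ hβl.le hlam hlam' hC hCψ hu0 hu1 hv0 hv1).trans ?_
    exact alg1 (abs_nonneg _) (abs_nonneg _) (mw_nonneg P lam β hu0.le hu1)
      (mw_nonneg Q lam β hv0.le hv1) hη le_rfl hC1p hCψ hL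
  intro ε hε
  have hlim : Filter.Tendsto (fun d : ℝ => 18 * c ^ 2 * (2 * ((d ^ (lam - β)) ^ 2 * (J1 + J2) * (J1 + J2))))
      (nhdsWithin 0 (Ioi 0)) (nhds 0) := by
    have h1 : ContinuousAt (fun d : ℝ => d ^ (lam - β)) 0 :=
      Real.continuousAt_rpow_const _ _ (Or.inr (by linarith))
    have h2 : ContinuousAt (fun d : ℝ => 18 * c ^ 2 *
        (2 * ((d ^ (lam - β)) ^ 2 * (J1 + J2) * (J1 + J2)))) 0 := by fun_prop
    have h3 := h2.tendsto
    simp only [Real.zero_rpow (show lam - β ≠ 0 by linarith)] at h3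
    refine (show Filter.Tendsto _ _ _ from h3.mono_left nhdsWithin_le_nhds).trans ?_
    simp
  have hev := (hlim.eventually (gt_mem_nhds hε)).and
    ((Ioo_mem_nhdsGT (show (0:ℝ) < 1 by norm_num)))
  obtain ⟨d, hd, hd01⟩ := hev.exists
  refine ⟨d, hd01.1, fun P Q hPQ => ?_⟩
  have hP : P.mesh ≤ d := ((le_max_left _ _).trans_lt hPQ).le
  have hQ : Q.mesh ≤ d := ((le_max_right _ _).trans_lt hPQ).le
  exact (main d hd01.1 hd01.2.le P Q hP hQ).trans_lt hd

end YS
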